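/- The set [𝖫^n, 𝖱] of free homotopy classes of continuous maps 𝖫^n → 𝖱 is in bijection with the set of antichains (ordered by inclusion) of 𝒫^a(N^±)∖{∅}, the nonempty admissible subsets of N^± = {+1,…,+n,−1,…,−n}. -/

import Mathlib

noncomputable section
open Set

/-- The first uncountable ordinal `ω₁`. -/
def Omega1 : Ordinal := Ordinal.omega 1

/-- The closed long ray `𝖱`: `ω₁ × [0,1)` with the lexicographic order. -/
def LongRay : Type 1 := {o : Ordinal // o < Omega1} ×ₗ (Set.Ico (0:ℝ) 1)

instance : LinearOrder LongRay :=
  inferInstanceAs (LinearOrder ({o : Ordinal // o < Omega1} ×ₗ (Set.Ico (0:ℝ) 1)))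

/-- `𝖱` carries the order topology. -/
instance : TopologicalSpace LongRay := Preorder.topology LongRay
instance : OrderTopology LongRay := ⟨rfl⟩

lemma omega1_pos : (0 : Ordinal) < Omega1 := Ordinal.omega_pos 1

/-- The point `0 = (0,0)` of the long ray. -/
def rayZero : LongRay := toLex (⟨0, omega1_pos⟩, ⟨0, by simp⟩)

/-- Identification of the countable ordinal `o` with the point `(o,0)` of the long ray
(junk value for `o ≥ ω₁`). -/
def ordR (o : Ordinal) : LongRay :=
  if h : o < Omega1 then toLex (⟨o, h⟩, ⟨0, by simp⟩) else rayZero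

/-- The `I`-diagonal at height `c` (only the values of `c` off `I` are relevant). -/
def Delta (n : ℕ) (I : Finset (Fin n)) (c : Fin n → LongRay) : Set (Fin n → LongRay) :=
  {x | (∀ i ∈ I, ∀ i' ∈ I, x i = x i') ∧ ∀ j ∉ I, x j = c j}

/-- `f` is `I`-cofinal if `f` restricted to `Δ_I = Δ_I(0)` is unbounded. -/
def ICofinal (n : ℕ) (f : (Fin n → LongRay) → LongRay) (I : Finset (Fin n)) : Prop :=
  ¬ BddAbove (f '' Delta n I (fun _ => rayZero))

/-- The cofinality class `𝔠(f) = {I : f is I-cofinal}`. -/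
def cofClass (n : ℕ) (f : (Fin n → LongRay) → LongRay) : Set (Finset (Fin n)) :=
  {I | ICofinal n f I}

/-- `M_I(c) = {x : x_i ≥ c for all i ∈ I}`. -/
def MSet (n : ℕ) (I : Finset (Fin n)) (c : LongRay) : Set (Fin n → LongRay) :=
  {x | ∀ i ∈ I, c ≤ x i}

/-- `E_I(b,d) = {x ∈ M_I(d) : x_j = b_j for all j ∉ I}`. -/
def ESet (n : ℕ) (I : Finset (Fin n)) (b : Fin n → LongRay) (d : LongRay) :
    Set (Fin n → LongRay) :=
  {x | (∀ i ∈ I, d ≤ x i) ∧ ∀ j ∉ I, x j = b j}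

/-- The long line `𝖫`: two copies of the long ray glued at `0` (a reversed copy
followed by a direct copy, with the two zeros identified), with the order topology. -/
def LongLine : Type 1 :=
  {x : LongRayᵒᵈ ⊕ₗ LongRay // x ≠ toLex (Sum.inl (OrderDual.toDual rayZero))}

instance : LinearOrder LongLine :=
  inferInstanceAs (LinearOrder
    {x : LongRayᵒᵈ ⊕ₗ LongRay // x ≠ toLex (Sum.inl (OrderDual.toDual rayZero))})

instance : TopologicalSpace LongLine := Preorder.topology LongLine
instance : OrderTopology LongLine := ⟨rfl⟩

/-- Signed coordinates: `(i, true)` stands for `+i` and `(i, false)` for `-i`.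
A set of signed coordinates is admissible if it contains no pair `+i, -i`. -/
def Admissible (n : ℕ) (I : Finset (Fin n × Bool)) : Prop :=
  ∀ i : Fin n, ¬ ((i, true) ∈ I ∧ (i, false) ∈ I)


/-- The countable ordinals. -/
abbrev CtblOrd : Type 1 := {o : Ordinal.{0} // o < Omega1.{0}}

/-- The half-open unit interval. -/
abbrev HalfOpen : Type := Set.Ico (0 : ℝ) 1

lemma CtblOrd.countable_Iio (a : CtblOrd) : (Iio a).Countable := by
  have h : (Iio a.1).Countable := by
    rw [← Cardinal.le_aleph0_iff_set_countable, Cardinal.mk_Iio_ordinal]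
    have h2 := a.2
    unfold Omega1 at h2
    rw [Cardinal.lt_omega_iff_card_lt, Cardinal.lt_aleph_one_iff] at h2
    simpa only [Cardinal.lift_le_aleph0, Ordinal.lift_card] using Cardinal.lift_le_aleph0.{0, 1}.2 h2
  exact (h.preimage Subtype.val_injective).mono fun x hx => hx

lemma CtblOrd.exists_forall_le {ι : Type*} [Countable ι] (f : ι → CtblOrd) :
    ∃ b, ∀ i, f i ≤ b := by
  have : ⨆ i, (f i).1 < Ordinal.omega 1 :=
    Ordinal.iSup_lt_omega_one (fun i => (f i).2)
  refine ⟨⟨_, this⟩, fun i => ?_⟩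
  have hb : BddAbove (range fun i => (f i).1) := ⟨Omega1, by rintro _ ⟨i, rfl⟩; exact (f i).2.le⟩
  exact le_ciSup hb i

instance : NoMaxOrder CtblOrd := ⟨fun a => by
  have h : Order.succ a.1 < Omega1 :=
    (Cardinal.isSuccLimit_omega 1).succ_lt a.2
  exact ⟨⟨_, h⟩, Order.lt_succ a.1⟩⟩

instance : OrderBot CtblOrd where
  bot := ⟨0, omega1_pos⟩
  bot_le a := zero_le (a := a.1)

instance : OrderBot HalfOpen where
  bot := ⟨0, by simp⟩
  bot_le a := a.2.1

namespace LongRay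

/-- The point of the long ray with integral part `a` and fractional part `t`. -/
def mk (a : CtblOrd) (t : HalfOpen) : LongRay := toLex (a, t)

/-- The integral part of a point of the long ray. -/
def fst (x : LongRay) : CtblOrd := (ofLex x).1

/-- The fractional part of a point of the long ray. -/
def snd (x : LongRay) : HalfOpen := (ofLex x).2

/-- The countable ordinals inside the long ray. -/
def ofOrd (a : CtblOrd) : LongRay := mk a ⊥

@[simp] lemma fst_mk (a t) : fst (mk a t) = a := rfl
@[simp] lemma snd_mk (a t) : snd (mk a t) = t := rfl
@[simp] lemma mk_fst_snd (x) : mk (fst x) (snd x) = x := rfl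

lemma lt_iff {x y : LongRay} : x < y ↔ x.fst < y.fst ∨ x.fst = y.fst ∧ x.snd < y.snd :=
  Prod.Lex.lt_iff

lemma le_iff {x y : LongRay} : x ≤ y ↔ x.fst < y.fst ∨ x.fst = y.fst ∧ x.snd ≤ y.snd :=
  Prod.Lex.le_iff

lemma fst_mono : Monotone fst := fun x y h => by
  rcases le_iff.1 h with h | h
  exacts [h.le, h.1.le]

lemma ofOrd_le_iff {a : CtblOrd} {x : LongRay} : ofOrd a ≤ x ↔ a ≤ x.fst := by
  rw [le_iff, le_iff_lt_or_eq (a := a)]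
  simp only [ofOrd, fst_mk, snd_mk, bot_le, and_true]

lemma lt_ofOrd_iff {a : CtblOrd} {x : LongRay} : x < ofOrd a ↔ x.fst < a := by
  rw [← not_le, ofOrd_le_iff, not_le]

lemma ofOrd_strictMono : StrictMono ofOrd := fun _ _ h => lt_iff.2 (Or.inl h)

instance : OrderBot LongRay where
  bot := ofOrd ⊥
  bot_le _ := ofOrd_le_iff.2 bot_le

lemma ofOrd_bot : ofOrd ⊥ = ⊥ := rfl

instance : NoMaxOrder LongRay := ⟨fun x => by
  obtain ⟨b, hb⟩ := exists_gt x.fst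
  exact ⟨ofOrd b, lt_ofOrd_iff.2 hb⟩⟩

instance : DenselyOrdered LongRay := ⟨fun x y h => by
  rcases lt_iff.1 h with h | ⟨h, h'⟩
  · obtain ⟨t, ht⟩ := exists_between x.snd.2.2
    exact ⟨mk x.fst ⟨t, x.snd.2.1.trans ht.1.le, ht.2⟩, lt_iff.2 (Or.inr ⟨rfl, ht.1⟩),
      lt_iff.2 (Or.inl h)⟩
  · obtain ⟨t, ht⟩ := exists_between (Subtype.coe_lt_coe.2 h')
    exact ⟨mk x.fst ⟨t, x.snd.2.1.trans ht.1.le, ht.2.trans y.snd.2.2⟩, lt_iff.2 (Or.inr ⟨rfl, ht.1⟩),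
      lt_iff.2 (Or.inr ⟨h, ht.2⟩)⟩⟩

lemma exists_forall_le {ι : Type*} [Countable ι] (f : ι → LongRay) : ∃ b, ∀ i, f i ≤ b := by
  obtain ⟨b, hb⟩ := CtblOrd.exists_forall_le fun i => (f i).fst
  obtain ⟨c, hc⟩ := exists_gt b
  exact ⟨ofOrd c, fun i => (lt_ofOrd_iff.2 ((hb i).trans_lt hc)).le⟩

/-- Positive weights of total mass one on a nonempty countable interval of ordinals. -/
lemma exists_weight {a b : CtblOrd} (hab : a < b) :
    ∃ w : CtblOrd → ℝ, HasSum w 1 ∧ (∀ c, 0 ≤ w c) ∧ ∀ c, 0 < w c ↔ c ∈ Ico a b := by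
  have hc : (Ico a b).Countable := (CtblOrd.countable_Iio b).mono fun x hx => hx.2
  have := hc.to_subtype
  let _ : Encodable (Ico a b) := Encodable.ofCountable _
  obtain ⟨ε, hε, c, hεc, -⟩ := posSumOfEncodable zero_lt_one (Ico a b)
  have hcpos : 0 < c := (hε ⟨a, le_rfl, hab⟩).trans_le
    (le_hasSum hεc _ fun i _ => (hε i).le)
  classical
  let v : CtblOrd → ℝ := fun x => if h : x ∈ Ico a b then ε ⟨x, h⟩ / c else 0
  have hv : ∀ x (h : x ∈ Ico a b), v x = ε ⟨x, h⟩ / c := fun x h => dif_pos h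
  have hv0 : ∀ x, x ∉ Ico a b → v x = 0 := fun x h => dif_neg h
  have hvp : ∀ x ∈ Ico a b, 0 < v x := fun x h => by
    rw [hv x h]; exact div_pos (hε _) hcpos
  refine ⟨v, ?_, fun x => ?_, fun x => ⟨fun h => ?_, hvp x⟩⟩
  · have h1 : HasSum (fun i : Ico a b => ε i / c) 1 := by
      simpa [hcpos.ne'] using hεc.div_const c
    have h2 : (fun i : Ico a b => ε i / c) = v ∘ (↑) := by
      ext ⟨x, hx⟩; simp [hv x hx]
    rw [h2] at h1
    rwa [hasSum_subtype_iff_of_support_subset] at h1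
    intro x hx
    by_contra h
    exact hx (hv0 x h)
  · by_cases h : x ∈ Ico a b
    exacts [(hvp x h).le, (hv0 x h).ge]
  · by_contra hx
    exact h.ne' (hv0 x hx)

/-- An order isomorphism of a nontrivial half-open interval of the long ray between ordinals
with `[0,1)`. -/
lemma exists_chart {a b : CtblOrd} (hab : a < b) :
    ∃ ψ : LongRay → ℝ, StrictMonoOn ψ (Ico (ofOrd a) (ofOrd b)) ∧
      ψ '' Ico (ofOrd a) (ofOrd b) = Ico 0 1 := by
  obtain ⟨w, hw, hw0, hwp⟩ := exists_weight hab
  have hs : ∀ s : Set CtblOrd, Summable (s.indicator w) := fun s => hw.summable.indicator s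
  have hi0 : ∀ (s : Set CtblOrd) i, 0 ≤ s.indicator w i :=
    fun s => indicator_nonneg (fun i _ => hw0 i)
  have hmono : ∀ {s t : Set CtblOrd}, s ⊆ t → ∑' c, s.indicator w c ≤ ∑' c, t.indicator w c :=
    fun h => (hs _).tsum_le_tsum (fun i => indicator_le_indicator_of_subset h hw0 i) (hs _)
  have hstep : ∀ c, ∑' d, (Iic c).indicator w d = ∑' d, (Iio c).indicator w d + w c := fun c => by
    have h1 : (Iic c).indicator w = (Iio c).indicator w + ({c} : Set CtblOrd).indicator w := by
      ext x
      rcases lt_trichotomy x c with h | rfl | h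
      · simp [h, h.le, h.ne]
      · simp
      · simp [h.not_ge, h.not_gt, h.ne']
    rw [h1]
    simp only [Pi.add_apply]
    rw [(hs _).tsum_add (hs _)]
    congr 1
    rw [tsum_eq_single c (by intro d hd; simp [hd])]
    simp
  have hfind : ∀ (s : Set CtblOrd) (y : ℝ), 0 ≤ y → y < ∑' c, s.indicator w c →
      ∃ c ∈ s, y < ∑' d, (Iic c).indicator w d := by
    intro s y hy hlt
    obtain ⟨F, hF⟩ := ((hs s).hasSum.eventually (lt_mem_nhds hlt)).exists
    classical
    have hFs : ∑ c ∈ F.filter (· ∈ s), w c = ∑ c ∈ F, s.indicator w c := by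
      rw [Finset.sum_filter]; rfl
    have hne : (F.filter (· ∈ s)).Nonempty := by
      rw [Finset.nonempty_iff_ne_empty]
      intro h
      rw [h, Finset.sum_empty] at hFs
      linarith
    refine ⟨(F.filter (· ∈ s)).max' hne, (Finset.mem_filter.1 (Finset.max'_mem _ hne)).2, ?_⟩
    rw [← hFs] at hF
    refine hF.trans_le ?_
    refine le_trans (Finset.sum_le_sum fun i hi => ?_) ((hs _).sum_le_tsum (F.filter (· ∈ s))
      fun i _ => hi0 _ i)
    rw [indicator_of_mem]
    exact Finset.le_max' _ _ hi
  have htot : ∑' c, (univ : Set CtblOrd).indicator w c = 1 := by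
    simpa using hw.tsum_eq
  refine ⟨fun x => ∑' d, (Iio x.fst).indicator w d + x.snd.1 * w x.fst, ?_, ?_⟩
  · intro x hx y hy hxy
    have hxp : 0 < w x.fst := (hwp _).2 ⟨ofOrd_le_iff.1 hx.1, lt_ofOrd_iff.1 hx.2⟩
    have hyp : 0 < w y.fst := (hwp _).2 ⟨ofOrd_le_iff.1 hy.1, lt_ofOrd_iff.1 hy.2⟩
    rcases lt_iff.1 hxy with h | ⟨h, h'⟩
    · have h1 := hmono (show Iic x.fst ⊆ Iio y.fst from fun z hz => lt_of_le_of_lt hz h)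
      rw [hstep] at h1
      have h2 := x.snd.2.2
      have h3 := mul_nonneg y.snd.2.1 hyp.le
      have h4 : x.snd.1 * w x.fst < w x.fst := by nlinarith
      dsimp only
      linarith
    · have h2 : x.snd.1 < y.snd.1 := h'
      dsimp only
      rw [h]
      have := mul_lt_mul_of_pos_right h2 hyp
      linarith
  · apply subset_antisymm
    · rintro _ ⟨x, hx, rfl⟩
      have hxp : 0 < w x.fst := (hwp _).2 ⟨ofOrd_le_iff.1 hx.1, lt_ofOrd_iff.1 hx.2⟩
      constructor
      · exact add_nonneg (tsum_nonneg (hi0 _)) (mul_nonneg x.snd.2.1 hxp.le)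
      · have h1 := hmono (subset_univ (Iic x.fst))
        rw [hstep, htot] at h1
        have h2 := x.snd.2.2
        have h4 : x.snd.1 * w x.fst < w x.fst := by nlinarith
        dsimp only
        linarith
    · rintro y ⟨hy0, hy1⟩
      obtain ⟨c₀, -, hc₀⟩ := hfind univ y hy0 (by rwa [htot])
      obtain ⟨c, hc, hmin⟩ := WellFounded.has_min (r := (· < ·)) wellFounded_lt
        {c : CtblOrd | y < ∑' d, (Iic c).indicator w d} ⟨c₀, hc₀⟩
      have hle : ∑' d, (Iio c).indicator w d ≤ y := by
        by_contra! h
        obtain ⟨d, hd, hd'⟩ := hfind _ y hy0 h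
        exact hmin d hd' hd
      have hc' : y < ∑' d, (Iio c).indicator w d + w c := by rw [← hstep]; exact hc
      have hpos : 0 < w c := by linarith
      have hmem := (hwp c).1 hpos
      refine ⟨mk c ⟨(y - ∑' d, (Iio c).indicator w d) / w c, div_nonneg (by linarith) hpos.le,
        (div_lt_one hpos).2 (by linarith)⟩, ⟨ofOrd_le_iff.2 hmem.1, lt_ofOrd_iff.2 hmem.2⟩, ?_⟩
      simp only [fst_mk, snd_mk]
      field_simp
      ring

end LongRay

namespace LongRay

lemma Ico_ofOrd_bot (b : CtblOrd) : Ico (ofOrd ⊥) (ofOrd b) = Iio (ofOrd b) := by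
  rw [ofOrd_bot, Ico_bot]

/-- Initial segments of the long ray are copies of `[0,1)`. -/
lemma exists_parametrization {b : CtblOrd} (hb : ⊥ < b) :
    ∃ g : HalfOpen → LongRay, Continuous g ∧ StrictMono g ∧ range g = Iio (ofOrd b) := by
  obtain ⟨ψ, hψ, him⟩ := exists_chart hb
  rw [Ico_ofOrd_bot] at hψ him
  have hex : ∀ t : HalfOpen, ∃ x ∈ Iio (ofOrd b), ψ x = t := fun t => by
    exact him.ge t.2
  choose g hg hψg using hex
  have hmono : StrictMono g := fun s t hst => by
    rw [← hψ.lt_iff_lt (hg s) (hg t), hψg, hψg]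
    exact hst
  have hrange : range g = Iio (ofOrd b) := by
    apply subset_antisymm
    · rintro _ ⟨t, rfl⟩
      exact hg t
    · intro x hx
      have h1 : ψ x ∈ Ico (0 : ℝ) 1 := him ▸ mem_image_of_mem ψ hx
      exact ⟨⟨ψ x, h1⟩, hψ.injOn (hg _) hx (hψg _)⟩
  have hoc : OrdConnected (range g) := by rw [hrange]; exact ordConnected_Iio
  exact ⟨g, (hmono.isEmbedding_of_ordConnected hoc).continuous, hmono, hrange⟩

lemma exists_lt_ofOrd (x : LongRay) : ∃ b : CtblOrd, ⊥ < b ∧ x < ofOrd b := by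
  obtain ⟨b, hb⟩ := exists_gt x.fst
  exact ⟨b, bot_le.trans_lt hb, lt_ofOrd_iff.2 hb⟩

lemma isSeparable_Iic (x : LongRay) : TopologicalSpace.IsSeparable (Iic x) := by
  obtain ⟨b, hb, hx⟩ := exists_lt_ofOrd x
  obtain ⟨g, hg, -, hr⟩ := exists_parametrization hb
  refine (TopologicalSpace.isSeparable_range hg).mono ?_
  rw [hr]
  exact fun y hy => lt_of_le_of_lt hy hx

lemma isCompact_Iic (x : LongRay) : IsCompact (Iic x) := by
  obtain ⟨b, hb, hx⟩ := exists_lt_ofOrd x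
  obtain ⟨g, hg, hmono, hr⟩ := exists_parametrization hb
  obtain ⟨s, rfl⟩ : x ∈ range g := hr ▸ hx
  have hc : IsCompact (Iic s) := by
    rw [Subtype.isCompact_iff]
    convert isCompact_Icc (a := (0 : ℝ)) (b := s) using 1
    ext t
    constructor
    · rintro ⟨u, hu, rfl⟩
      exact ⟨u.2.1, hu⟩
    · rintro ⟨h0, h1⟩
      exact ⟨⟨t, h0, h1.trans_lt s.2.2⟩, h1, rfl⟩
  convert hc.image hg using 1
  ext y
  constructor
  · intro hy
    obtain ⟨t, rfl⟩ : y ∈ range g := hr ▸ lt_of_le_of_lt hy hx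
    exact ⟨t, hmono.le_iff_le.1 hy, rfl⟩
  · rintro ⟨t, ht, rfl⟩
    exact hmono.monotone ht

instance : PathConnectedSpace LongRay := by
  refine ⟨⟨⊥⟩, fun x y => ?_⟩
  obtain ⟨b, hb, hx⟩ := exists_lt_ofOrd (max x y)
  obtain ⟨g, hg, -, hr⟩ := exists_parametrization hb
  have : PathConnectedSpace HalfOpen :=
    isPathConnected_iff_pathConnectedSpace.1 ((convex_Ico 0 1).isPathConnected ⟨0, by simp⟩)
  have h := isPathConnected_range hg
  rw [hr] at h
  exact (h.joinedIn x (lt_of_le_of_lt (le_max_left _ _) hx) y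
    (lt_of_le_of_lt (le_max_right _ _) hx)).joined

lemma exists_tendsto_of_monotone {u : ℕ → LongRay} (hu : Monotone u) :
    ∃ ξ, Filter.Tendsto u Filter.atTop (nhds ξ) ∧ ∀ k, u k ≤ ξ := by
  obtain ⟨b, hb⟩ := exists_forall_le u
  have hsub : closure (range u) ⊆ Iic b :=
    closure_minimal (by rintro _ ⟨k, rfl⟩; exact hb k) isClosed_Iic
  obtain ⟨ξ, -, hξ⟩ := ((isCompact_Iic b).of_isClosed_subset isClosed_closure hsub).exists_isLUB
    ((range_nonempty u).closure)
  have hlub : IsLUB (range u) ξ :=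
    ⟨fun y hy => hξ.1 (subset_closure hy), fun m hm => hξ.2 (closure_minimal hm isClosed_Iic)⟩
  exact ⟨ξ, tendsto_atTop_isLUB hu hlub, fun k => hlub.1 ⟨k, rfl⟩⟩

/-- Two closed unbounded subsets of the long ray meet. -/
lemma exists_mem_inter {S T : Set LongRay} (hS : IsClosed S) (hT : IsClosed T)
    (hS' : ∀ x, ∃ y ∈ S, x ≤ y) (hT' : ∀ x, ∃ y ∈ T, x ≤ y) : (S ∩ T).Nonempty := by
  choose p hpS hp using hS'
  choose q hqT hq using hT'
  let u : ℕ → LongRay := fun k => Nat.rec ⊥ (fun _ x => q (p x)) k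
  have hu : ∀ k, u (k + 1) = q (p (u k)) := fun _ => rfl
  have hmono : Monotone u := monotone_nat_of_le_succ fun k => by
    rw [hu]; exact (hp _).trans (hq _)
  obtain ⟨ξ, hξ, -⟩ := exists_tendsto_of_monotone hmono
  have hξ' := hξ.comp (Filter.tendsto_add_atTop_nat 1)
  refine ⟨ξ, ?_, ?_⟩
  · refine hS.mem_of_tendsto (f := fun k => p (u k)) (b := Filter.atTop) ?_
      (Filter.Eventually.of_forall fun k => hpS _)
    exact tendsto_of_tendsto_of_tendsto_of_le_of_le hξ hξ' (fun k => hp _)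
      (fun k => (hq _).trans_eq (hu k).symm)
  · exact hT.mem_of_tendsto hξ' (Filter.Eventually.of_forall fun k => hqT _)

/-- An unbounded continuous self-map of the long ray tends to infinity. -/
lemma eventually_ge_of_unbounded {u : LongRay → LongRay} (hu : Continuous u)
    (hun : ¬ BddAbove (range u)) (β : LongRay) : ∃ γ, ∀ r, γ ≤ r → β ≤ u r := by
  by_contra! hcon
  obtain ⟨β', hβ'⟩ := exists_gt β
  have hS : IsClosed {r | u r ≤ β} := isClosed_le hu continuous_const
  have hT : IsClosed {r | β' ≤ u r} := isClosed_le continuous_const hu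
  obtain ⟨r, hr, hr'⟩ := exists_mem_inter hS hT
    (fun x => (hcon x).imp fun r hr => ⟨hr.2.le, hr.1⟩) (fun x => by
      by_contra! h
      obtain ⟨m, hm⟩ := (isCompact_Iic x).bddAbove_image hu.continuousOn
      refine hun ⟨max m β', ?_⟩
      rintro _ ⟨r, rfl⟩
      by_cases hr : r ≤ x
      · exact (hm ⟨r, hr, rfl⟩).trans (le_max_left _ _)
      · have : u r < β' := by
          by_contra! h'
          exact hr (h r h').le
        exact this.le.trans (le_max_right _ _))
  exact absurd (hr'.trans hr) (not_le.2 hβ')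

section Families

variable {Y : Type*} [TopologicalSpace Y] {F : Y × LongRay → LongRay}

lemma exists_uniform_bound (hF : Continuous F) {c : Set Y} (hc : c.Countable)
    (h : ∀ y ∈ c, BddAbove (range fun r => F (y, r))) :
    ∃ γ, ∀ y ∈ closure c, ∀ r, F (y, r) ≤ γ := by
  have := hc.to_subtype
  choose! γ hγ using h
  obtain ⟨g, hg⟩ := exists_forall_le fun y : c => γ y
  refine ⟨g, fun y hy r => ?_⟩
  have hcl : IsClosed {y | F (y, r) ≤ g} := isClosed_le (by fun_prop) continuous_const
  exact closure_minimal (fun y hy => (hγ y hy ⟨r, rfl⟩).trans (hg ⟨y, hy⟩)) hcl hy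

lemma exists_uniform_lower_bound (hF : Continuous F) {c : Set Y} (hc : c.Countable)
    (h : ∀ y ∈ c, ¬ BddAbove (range fun r => F (y, r))) (β : LongRay) :
    ∃ γ, ∀ y ∈ closure c, ∀ r, γ ≤ r → β ≤ F (y, r) := by
  have := hc.to_subtype
  have h' : ∀ y ∈ c, ∃ γ, ∀ r, γ ≤ r → β ≤ F (y, r) := fun y hy =>
    eventually_ge_of_unbounded (u := fun r => F (y, r)) (by fun_prop) (h y hy) β
  choose! γ hγ using h'
  obtain ⟨g, hg⟩ := exists_forall_le fun y : c => γ y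
  refine ⟨g, fun y hy r hr => ?_⟩
  have hcl : IsClosed {y | β ≤ F (y, r)} := isClosed_le continuous_const (by fun_prop)
  exact closure_minimal (fun y hy => hγ y hy r ((hg ⟨y, hy⟩).trans hr)) hcl hy

lemma not_bddAbove_of_forall_ge {u : LongRay → LongRay}
    (h : ∀ β, ∃ r, β ≤ u r) : ¬ BddAbove (range u) := by
  rintro ⟨m, hm⟩
  obtain ⟨m', hm'⟩ := exists_gt m
  obtain ⟨r, hr⟩ := h m'
  exact absurd (hr.trans (hm ⟨r, rfl⟩)) (not_le.2 hm')

/-- Along a connected first countable family of self-maps of the long ray, boundedness is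
constant. -/
lemma bddAbove_iff_of_preconnected [FirstCountableTopology Y] [PreconnectedSpace Y]
    (hF : Continuous F) (y y' : Y) :
    BddAbove (range fun r => F (y, r)) ↔ BddAbove (range fun r => F (y', r)) := by
  have hlim : ∀ {S : Set Y} {z}, z ∈ closure S →
      ∃ c ⊆ S, c.Countable ∧ z ∈ closure c := fun {S z} hz => by
    obtain ⟨x, hx, hxz⟩ := mem_closure_iff_seq_limit.1 hz
    exact ⟨range x, by rintro _ ⟨k, rfl⟩; exact hx k, countable_range x,
      mem_closure_of_tendsto hxz (Filter.Eventually.of_forall fun k => ⟨k, rfl⟩)⟩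
  have hclopen : IsClopen {y | BddAbove (range fun r => F (y, r))} := by
    constructor
    · refine isClosed_of_closure_subset fun z hz => ?_
      obtain ⟨c, hcS, hc, hz⟩ := hlim hz
      obtain ⟨γ, hγ⟩ := exists_uniform_bound hF hc hcS
      exact ⟨γ, by rintro _ ⟨r, rfl⟩; exact hγ z hz r⟩
    · rw [← isClosed_compl_iff]
      refine isClosed_of_closure_subset fun z hz => ?_
      obtain ⟨c, hcS, hc, hz⟩ := hlim hz
      refine not_bddAbove_of_forall_ge fun β => ?_
      obtain ⟨γ, hγ⟩ := exists_uniform_lower_bound hF hc hcS β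
      exact ⟨γ, hγ z hz γ le_rfl⟩
  rcases isClopen_iff.1 hclopen with h | h
  · have : ∀ z, z ∉ {y | BddAbove (range fun r => F (y, r))} := by simp [h]
    exact iff_of_false (this y) (this y')
  · have : ∀ z, z ∈ {y | BddAbove (range fun r => F (y, r))} := by simp [h]
    exact iff_of_true (this y) (this y')

end Families

end LongRay

section LexShift

variable {W : Type*} [LinearOrder W] [SuccOrder W]

/-- Translation upwards by `s` on `W ×ₗ [0,1)`. -/
def lexUp (s : unitInterval) (y : W ×ₗ HalfOpen) : W ×ₗ HalfOpen :=
  if h : ((ofLex y).2 : ℝ) + s < 1 then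
    toLex ((ofLex y).1, ⟨(ofLex y).2 + s, add_nonneg (ofLex y).2.2.1 s.2.1, h⟩)
  else toLex (Order.succ (ofLex y).1, ⟨(ofLex y).2 + s - 1, by linarith,
    by linarith [(ofLex y).2.2.2, s.2.2]⟩)

lemma lexUp_of_lt {s : unitInterval} {ν : W} {t : HalfOpen} (h : (t : ℝ) + s < 1) :
    lexUp s (toLex (ν, t)) = toLex (ν, ⟨t + s, add_nonneg t.2.1 s.2.1, h⟩) := dif_pos h

lemma lexUp_of_le {s : unitInterval} {ν : W} {t : HalfOpen} (h : 1 ≤ (t : ℝ) + s) :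
    lexUp s (toLex (ν, t)) = toLex (Order.succ ν, ⟨t + s - 1, by linarith,
      by linarith [t.2.2, s.2.2]⟩) := dif_neg (not_lt.2 h)

lemma lexUp_zero (y : W ×ₗ HalfOpen) : lexUp 0 y = y := by
  induction y using Lex.rec with | _ y
  obtain ⟨ν, t⟩ := y
  rw [lexUp_of_lt (by simpa using t.2.2)]
  congr
  simp

variable [NoMaxOrder W]

lemma lexUp_strictMono (s : unitInterval) : StrictMono (lexUp s : W ×ₗ HalfOpen → _) := by
  intro x y h
  induction x using Lex.rec with | _ x
  induction y using Lex.rec with | _ y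
  obtain ⟨ν, t, ht0, ht1⟩ := x
  obtain ⟨μ, r, hr0, hr1⟩ := y
  rw [Prod.Lex.toLex_lt_toLex] at h
  have hs := s.2
  rcases h with h | ⟨h, h'⟩
  · have hle := Order.succ_le_of_lt h
    have hlt := Order.succ_lt_succ h
    rcases lt_or_ge (t + (s : ℝ)) 1 with h1 | h1 <;> rcases lt_or_ge (r + (s : ℝ)) 1 with h2 | h2
    · rw [lexUp_of_lt h1, lexUp_of_lt h2]
      exact Prod.Lex.toLex_lt_toLex.2 (Or.inl h)
    · rw [lexUp_of_lt h1, lexUp_of_le h2]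
      exact Prod.Lex.toLex_lt_toLex.2 (Or.inl (h.trans (Order.lt_succ _)))
    · rw [lexUp_of_le h1, lexUp_of_lt h2, Prod.Lex.toLex_lt_toLex]
      rcases hle.lt_or_eq with h3 | h3
      · exact Or.inl h3
      · refine Or.inr ⟨h3, Subtype.mk_lt_mk.2 ?_⟩
        dsimp only
        linarith [hs.1, hs.2]
    · rw [lexUp_of_le h1, lexUp_of_le h2]
      exact Prod.Lex.toLex_lt_toLex.2 (Or.inl hlt)
  · dsimp only at h
    subst h
    have h' : t < r := h'
    rcases lt_or_ge (t + (s : ℝ)) 1 with h1 | h1 <;> rcases lt_or_ge (r + (s : ℝ)) 1 with h2 | h2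
    · rw [lexUp_of_lt h1, lexUp_of_lt h2]
      exact Prod.Lex.toLex_lt_toLex.2 (Or.inr ⟨rfl, Subtype.mk_lt_mk.2 (by dsimp only; linarith)⟩)
    · rw [lexUp_of_lt h1, lexUp_of_le h2]
      exact Prod.Lex.toLex_lt_toLex.2 (Or.inl (Order.lt_succ _))
    · linarith
    · rw [lexUp_of_le h1, lexUp_of_le h2]
      exact Prod.Lex.toLex_lt_toLex.2 (Or.inr ⟨rfl, Subtype.mk_lt_mk.2 (by dsimp only; linarith)⟩)

lemma lexUp_strictMono_left (y : W ×ₗ HalfOpen) : StrictMono fun s => lexUp s y := by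
  intro s s' h
  induction y using Lex.rec with | _ y
  obtain ⟨ν, t, ht0, ht1⟩ := y
  have h' : (s : ℝ) < s' := h
  dsimp only
  rcases lt_or_ge (t + (s : ℝ)) 1 with h1 | h1 <;> rcases lt_or_ge (t + (s' : ℝ)) 1 with h2 | h2
  · rw [lexUp_of_lt h1, lexUp_of_lt h2]
    exact Prod.Lex.toLex_lt_toLex.2 (Or.inr ⟨rfl, Subtype.mk_lt_mk.2 (by dsimp only; linarith)⟩)
  · rw [lexUp_of_lt h1, lexUp_of_le h2]
    exact Prod.Lex.toLex_lt_toLex.2 (Or.inl (Order.lt_succ _))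
  · linarith
  · rw [lexUp_of_le h1, lexUp_of_le h2]
    exact Prod.Lex.toLex_lt_toLex.2 (Or.inr ⟨rfl, Subtype.mk_lt_mk.2 (by dsimp only; linarith)⟩)

lemma exists_lexUp_eq {y z : W ×ₗ HalfOpen} (h : y ≤ z) (h' : z ≤ lexUp 1 y) :
    ∃ s, lexUp s y = z := by
  induction y using Lex.rec with | _ y
  induction z using Lex.rec with | _ z
  obtain ⟨ν, t, ht0, ht1⟩ := y
  obtain ⟨μ, r, hr0, hr1⟩ := z
  have h1 : (1 : ℝ) ≤ t + ((1 : unitInterval) : ℝ) := by simpa using ht0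
  rw [lexUp_of_le h1, Prod.Lex.toLex_le_toLex] at h'
  rw [Prod.Lex.toLex_le_toLex] at h
  dsimp only at h h'
  rcases h with h | ⟨rfl, h⟩
  · rcases h' with h' | ⟨rfl, h'⟩
    · exact absurd (Order.lt_succ_iff.1 h') (not_le.2 h)
    · have h' : r ≤ t + ((1 : unitInterval) : ℝ) - 1 := h'
      simp only [Set.Icc.coe_one, add_sub_cancel_right] at h'
      refine ⟨⟨1 + r - t, by linarith, by linarith⟩, ?_⟩
      rw [lexUp_of_le (by dsimp only; linarith)]
      congr
      dsimp only
      ring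
  · have h : t ≤ r := h
    refine ⟨⟨r - t, by linarith, by linarith⟩, ?_⟩
    rw [lexUp_of_lt (by dsimp only; linarith)]
    congr
    dsimp only
    ring

/-- Upward translation has a lower adjoint: the downward translation truncated at limits. -/
lemma exists_lexDown (s : unitInterval) (x : W ×ₗ HalfOpen) :
    ∃ z, ∀ y, z ≤ y ↔ x ≤ lexUp s y := by
  induction x using Lex.rec with | _ x
  obtain ⟨ν, t, ht0, ht1⟩ := x
  have hs := s.2
  rcases le_or_gt (s : ℝ) t with hst | hst
  · refine ⟨toLex (ν, ⟨t - s, by linarith, by linarith [hs.1]⟩), fun y => ?_⟩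
    have : toLex (ν, (⟨t, ht0, ht1⟩ : HalfOpen)) =
        lexUp s (toLex (ν, ⟨t - s, by linarith, by linarith [hs.1]⟩)) := by
      rw [lexUp_of_lt (by dsimp only; linarith)]
      congr
      dsimp only
      ring
    rw [this, (lexUp_strictMono s).le_iff_le]
  by_cases hν : ∃ μ, Order.succ μ = ν
  · obtain ⟨μ, rfl⟩ := hν
    refine ⟨toLex (μ, ⟨1 + t - s, by linarith [hs.2], by linarith⟩), fun y => ?_⟩
    have : toLex (Order.succ μ, (⟨t, ht0, ht1⟩ : HalfOpen)) =
        lexUp s (toLex (μ, ⟨1 + t - s, by linarith [hs.2], by linarith⟩)) := by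
      rw [lexUp_of_le (by dsimp only; linarith)]
      congr
      dsimp only
      ring
    rw [this, (lexUp_strictMono s).le_iff_le]
  · refine ⟨toLex (ν, ⟨0, by simp⟩), fun y => ?_⟩
    induction y using Lex.rec with | _ y
    obtain ⟨μ, r, hr0, hr1⟩ := y
    rcases lt_or_ge (r + (s : ℝ)) 1 with h2 | h2
    · rw [lexUp_of_lt h2, Prod.Lex.toLex_le_toLex, Prod.Lex.toLex_le_toLex]
      refine or_congr Iff.rfl (and_congr Iff.rfl (iff_of_true hr0 ?_))
      exact Subtype.mk_le_mk.2 (by dsimp only; linarith)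
    · rw [lexUp_of_le h2, Prod.Lex.toLex_le_toLex, Prod.Lex.toLex_le_toLex]
      have hne : ν ≠ Order.succ μ := fun h => hν ⟨μ, h.symm⟩
      simp only [Order.lt_succ_iff, hne, false_and, or_false]
      rw [le_iff_lt_or_eq (a := ν)]
      exact or_congr Iff.rfl (and_iff_left (show (0 : ℝ) ≤ r from hr0))

lemma le_lexUp_one (w : W) (t : HalfOpen) :
    toLex (w, t) ≤ lexUp 1 (toLex (w, (⟨0, by simp⟩ : HalfOpen))) := by
  rw [lexUp_of_le (by simp)]
  exact Prod.Lex.toLex_le_toLex.2 (Or.inl (Order.lt_succ _))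

end LexShift

/-- Closed unbounded sets of countable ordinals containing `0`. -/
structure IsClosedUnbounded (C : Set CtblOrd) : Prop where
  bot_mem : ⊥ ∈ C
  isLUB_mem : ∀ S ⊆ C, S.Nonempty → ∀ a, IsLUB S a → a ∈ C
  exists_gt : ∀ a, ∃ c ∈ C, a < c

lemma CtblOrd.exists_isLUB {S : Set CtblOrd} (h : BddAbove S) : ∃ a, IsLUB S a := by
  obtain ⟨a, ha, hmin⟩ := WellFounded.has_min (r := (· < ·)) wellFounded_lt (upperBounds S) h
  exact ⟨a, ha, fun b hb => not_lt.1 (hmin b hb)⟩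

namespace IsClosedUnbounded

variable {C : Set CtblOrd}

lemma exists_floor (hC : IsClosedUnbounded C) (a : CtblOrd) :
    ∃ c : C, c ≤ a ∧ ∀ d : C, d ≤ a → d ≤ c := by
  have hb : a ∈ upperBounds (C ∩ Iic a) := fun x hx => hx.2
  obtain ⟨c, hc⟩ := CtblOrd.exists_isLUB ⟨a, hb⟩
  exact ⟨⟨c, hC.isLUB_mem (C ∩ Iic a) inter_subset_left ⟨⊥, hC.bot_mem, mem_Iic.2 bot_le⟩ c hc⟩, hc.2 hb,
    fun d hd => hc.1 ⟨d.2, hd⟩⟩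

lemma exists_next (hC : IsClosedUnbounded C) (c : C) : ∃ d : C, c < d ∧ ∀ e : C, c < e → d ≤ e := by
  obtain ⟨d₀, hd₀, hcd⟩ := hC.exists_gt c
  obtain ⟨d, hd, hmin⟩ := WellFounded.has_min (r := (· < ·)) (wellFounded_lt (α := C))
    (Ioi c) ⟨⟨d₀, hd₀⟩, hcd⟩
  exact ⟨d, hd, fun e he => not_lt.1 (hmin e he)⟩

open LongRay

/-- The long ray is isomorphic to its subdivision along a closed unbounded set. -/
lemma exists_orderIso (hC : IsClosedUnbounded C) :
    ∃ e : LongRay ≃o (C ×ₗ HalfOpen), ∀ (c : C) (x : LongRay),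
      toLex (c, (⟨0, by simp⟩ : HalfOpen)) ≤ e x ↔ ofOrd c ≤ x := by
  choose fl hfl hflmax using hC.exists_floor
  choose nx hnx hnxmin using hC.exists_next
  choose ψ hψ him using fun c : C => exists_chart (Subtype.coe_lt_coe.2 (hnx c))
  have hmem : ∀ x : LongRay, x ∈ Ico (ofOrd (fl x.fst)) (ofOrd (nx (fl x.fst))) := fun x =>
    ⟨ofOrd_le_iff.2 (hfl _), by
      by_contra! h
      exact absurd (hflmax _ _ (ofOrd_le_iff.1 h)) (not_le.2 (hnx _))⟩
  have hflmono : Monotone fl := fun a b h => hflmax _ _ ((hfl a).trans h)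
  have hfleq : ∀ (c : C) (x : LongRay), x ∈ Ico (ofOrd (c : CtblOrd)) (ofOrd (nx c)) →
      fl x.fst = c := fun c x hx => by
    refine le_antisymm ?_ (hflmax _ _ (ofOrd_le_iff.1 hx.1))
    by_contra! h
    exact absurd (lt_ofOrd_iff.1 hx.2)
      (not_lt.2 ((Subtype.coe_le_coe.2 (hnxmin _ _ h)).trans (hfl _)))
  let f : LongRay → C ×ₗ HalfOpen := fun x =>
    toLex (fl x.fst, ⟨ψ (fl x.fst) x, (him _).le (mem_image_of_mem _ (hmem x))⟩)
  have hf : StrictMono f := fun x y h => by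
    rw [Prod.Lex.toLex_lt_toLex]
    rcases (hflmono (fst_mono h.le)).lt_or_eq with h1 | h1
    · exact Or.inl h1
    · refine Or.inr ⟨h1, Subtype.mk_lt_mk.2 ?_⟩
      have hy := hmem y
      rw [← h1] at hy ⊢
      exact hψ _ (hmem x) hy h
  have hsurj : Function.Surjective f := fun z => by
    induction z using Lex.rec with | _ z
    obtain ⟨c, t⟩ := z
    obtain ⟨x, hx, hxt⟩ := (him c).ge t.2
    refine ⟨x, ?_⟩
    have h1 := hfleq c x hx
    simp only [f]
    congr
    rw [h1, hxt]
  refine ⟨hf.orderIsoOfSurjective f hsurj, fun c x => ?_⟩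
  change toLex (c, (⟨0, by simp⟩ : HalfOpen)) ≤ toLex (fl x.fst, _) ↔ _
  rw [Prod.Lex.toLex_le_toLex, ofOrd_le_iff]
  constructor
  · rintro (h | ⟨h, -⟩)
    · exact (Subtype.coe_le_coe.2 h.le).trans (hfl _)
    · dsimp only at h
      rw [h]
      exact hfl _
  · intro h
    rcases (hflmax _ _ h).lt_or_eq with h1 | h1
    · exact Or.inl h1
    · exact Or.inr ⟨h1, Subtype.mk_le_mk.2 ((him _).le (mem_image_of_mem _ (hmem x))).1⟩

/-- The identity of the long ray is homotopic to a map pushing every point below the largest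
element of a given closed unbounded set that precedes it. -/
lemma exists_pushdown (hC : IsClosedUnbounded C) :
    ∃ Φ : unitInterval × LongRay → LongRay, Continuous Φ ∧ (∀ x, Φ (0, x) = x) ∧
      ∀ x y, (∀ c ∈ C, ofOrd c ≤ x → ofOrd c ≤ y) → Φ (1, x) ≤ y := by
  obtain ⟨e, he⟩ := hC.exists_orderIso
  let _ : SuccOrder C := SuccOrder.ofLinearWellFoundedLT C
  have : NoMaxOrder C := ⟨fun a => (hC.exists_next a).imp fun b hb => hb.1⟩
  let U : unitInterval → LongRay → LongRay := fun s y => e.symm (lexUp s (e y))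
  have hU0 : ∀ y, U 0 y = y := fun y => by simp [U, lexUp_zero]
  have hUmono : ∀ s, StrictMono (U s) := fun s =>
    e.symm.strictMono.comp ((lexUp_strictMono s).comp e.strictMono)
  have hUleft : ∀ y, StrictMono fun s => U s y := fun y =>
    e.symm.strictMono.comp (lexUp_strictMono_left _)
  have hUcont : ∀ y, Continuous fun s => U s y := fun y => by
    refine ((hUleft y).isEmbedding_of_ordConnected ⟨?_⟩).continuous
    rintro _ ⟨s, rfl⟩ _ ⟨s', rfl⟩ z ⟨hz, hz'⟩
    have h1 : e y ≤ e z := e.le_iff_le.2 <|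
      (hU0 y).ge.trans <| ((hUleft y).monotone s.2.1).trans hz
    have h2 : e z ≤ lexUp 1 (e y) := by
      have := hz'.trans ((hUleft y).monotone (unitInterval.le_one' (t := s')))
      rwa [← e.le_iff_le, e.apply_symm_apply] at this
    obtain ⟨r, hr⟩ := exists_lexUp_eq h1 h2
    exact ⟨r, by simp [U, hr]⟩
  have hex : ∀ p : unitInterval × LongRay, ∃ z, ∀ y, z ≤ y ↔ p.2 ≤ U p.1 y := fun p => by
    obtain ⟨z, hz⟩ := exists_lexDown p.1 (e p.2)
    refine ⟨e.symm z, fun y => ?_⟩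
    rw [e.symm_apply_le, hz, e.le_symm_apply]
  choose Φ hΦ using hex
  have hadj : ∀ p y, y < Φ p ↔ U p.1 y < p.2 := fun p y => by
    rw [← not_le, hΦ, not_le]
  refine ⟨Φ, ?_, ?_, ?_⟩
  · rw [OrderTopology.topology_eq_generate_intervals (α := LongRay), continuous_generateFrom_iff]
    rintro _ ⟨a, rfl | rfl⟩
    · have : Φ ⁻¹' Ioi a = {p | U p.1 a < p.2} := by
        ext p
        exact hadj p a
      rw [this]
      exact isOpen_lt ((hUcont a).comp continuous_fst) continuous_snd
    · have : Φ ⁻¹' Iio a = ⋃ b ∈ Iio a, {p | p.2 < U p.1 b} := by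
        ext p
        simp only [mem_preimage, mem_Iio, mem_iUnion, mem_ofPred_eq, exists_prop]
        constructor
        · intro h
          obtain ⟨b, hb, hb'⟩ := exists_between h
          exact ⟨b, hb', ((hΦ _ _).1 le_rfl).trans_lt (hUmono _ hb)⟩
        · rintro ⟨b, hb, hb'⟩
          exact ((hΦ _ _).2 hb'.le).trans_lt hb
      rw [this]
      exact isOpen_biUnion fun b _ => isOpen_lt continuous_snd ((hUcont b).comp continuous_fst)
  · intro x
    refine le_antisymm ((hΦ _ _).2 (hU0 x).ge) ?_
    have := (hΦ (0, x) _).1 le_rfl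
    rwa [hU0] at this
  · intro x y h
    rw [hΦ]
    obtain ⟨c, t, hct⟩ : ∃ c t, e x = toLex (c, t) := ⟨(ofLex (e x)).1, (ofLex (e x)).2, rfl⟩
    have h1 : ofOrd c ≤ x := by
      rw [← he, hct]
      exact Prod.Lex.toLex_le_toLex.2 (Or.inr ⟨rfl, t.2.1⟩)
    have h2 := (he c y).2 (h c c.2 h1)
    rw [e.le_symm_apply, hct]
    exact (le_lexUp_one c t).trans ((lexUp_strictMono 1).monotone h2)

end IsClosedUnbounded

section Homotopy

variable {X : Type*} [TopologicalSpace X]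

/-- A map lying between two homotopic maps is homotopic to them. -/
lemma homotopic_of_le_of_le {f g h : C(X, LongRay)} (hfg : ∀ x, f x ≤ g x) (hgh : ∀ x, g x ≤ h x)
    (H : h.Homotopic f) : h.Homotopic g := by
  obtain ⟨H⟩ := H
  have h1 : g.Homotopic f := ⟨{
    toFun := fun p => min (H p) (g p.2)
    continuous_toFun := by fun_prop
    map_zero_left := fun x => by simpa using hgh x
    map_one_left := fun x => by simpa using hfg x }⟩
  exact ContinuousMap.Homotopic.trans ⟨H⟩ h1.symm

/-- Two maps to the long ray are homotopic as soon as they pass the points of a closed unbounded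
set simultaneously. -/
lemma IsClosedUnbounded.homotopic {C : Set CtblOrd} (hC : IsClosedUnbounded C)
    {f g : C(X, LongRay)}
    (h : ∀ c ∈ C, ∀ x, LongRay.ofOrd c ≤ f x ↔ LongRay.ofOrd c ≤ g x) : f.Homotopic g := by
  obtain ⟨Φ, hΦ, hΦ0, hΦC⟩ := hC.exists_pushdown
  let m : C(X, LongRay) := ⟨fun x => max (f x) (g x), by fun_prop⟩
  let l : C(X, LongRay) := ⟨fun x => Φ (1, max (f x) (g x)), by fun_prop⟩
  have hml : m.Homotopic l := ⟨{
    toFun := fun p => Φ (p.1, m p.2)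
    continuous_toFun := by fun_prop
    map_zero_left := fun x => hΦ0 _
    map_one_left := fun x => rfl }⟩
  have hf : m.Homotopic f := homotopic_of_le_of_le (f := l)
    (fun x => hΦC _ _ fun c hc hcx => (le_max_iff.1 hcx).elim id (h c hc x).2)
    (fun x => le_max_left _ _) hml
  have hg : m.Homotopic g := homotopic_of_le_of_le (f := l)
    (fun x => hΦC _ _ fun c hc hcx => (le_max_iff.1 hcx).elim (h c hc x).1 id)
    (fun x => le_max_right _ _) hml
  exact hf.symm.trans hg

end Homotopy

namespace LongLine

/-- The half of the long line with the given sign, as an image of the long ray. -/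
def ofRay : Bool → LongRay → LongLine
  | true, r => ⟨toLex (Sum.inr r), by simp⟩
  | false, r =>
    if h : r = rayZero then ⟨toLex (Sum.inr r), by simp⟩
    else ⟨toLex (Sum.inl (OrderDual.toDual r)), by simpa using h⟩

/-- The positive (`true`) and negative (`false`) parts of a point of the long line. -/
def part (s : Bool) (x : LongLine) : LongRay :=
  match s, ofLex x.1 with
  | true, Sum.inr r => r
  | true, Sum.inl _ => rayZero
  | false, Sum.inr _ => rayZero
  | false, Sum.inl r => OrderDual.ofDual r

lemma rayZero_eq_bot : rayZero = ⊥ := rfl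

lemma ofRay_false_zero : ofRay false ⊥ = ofRay true ⊥ := dif_pos rfl

lemma ofRay_false_of_ne {r : LongRay} (h : r ≠ rayZero) :
    ofRay false r = ⟨toLex (Sum.inl (OrderDual.toDual r)), by simpa using h⟩ := dif_neg h

lemma part_ofRay (s : Bool) (r : LongRay) : part s (ofRay s r) = r := by
  cases s
  · rcases eq_or_ne r rayZero with h | h
    · rw [h, rayZero_eq_bot, ofRay_false_zero]
      rfl
    · rw [ofRay_false_of_ne h]
      rfl
  · rfl

lemma part_ofRay_not (s : Bool) (r : LongRay) : part (!s) (ofRay s r) = ⊥ := by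
  cases s
  · rcases eq_or_ne r rayZero with h | h
    · rw [h, rayZero_eq_bot, ofRay_false_zero]
      rfl
    · rw [ofRay_false_of_ne h]
      rfl
  · rfl

lemma exists_eq_ofRay (x : LongLine) : ∃ s, x = ofRay s (part s x) ∧ part (!s) x = ⊥ := by
  obtain ⟨x, hx⟩ := x
  induction x using Lex.rec with | _ x
  rcases x with r | r
  · refine ⟨false, ?_, rfl⟩
    have h : OrderDual.ofDual r ≠ rayZero := fun h => hx (by rw [← h]; rfl)
    exact (ofRay_false_of_ne h).symm
  · exact ⟨true, rfl, rfl⟩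

lemma eq_ofRay_of_pos {s : Bool} {x : LongLine} (h : ⊥ < part s x) : x = ofRay s (part s x) := by
  obtain ⟨s', hx, h'⟩ := exists_eq_ofRay x
  by_cases hs : s = s'
  · rwa [hs]
  · rw [Bool.eq_not.2 hs, h'] at h
    exact absurd h (lt_irrefl _)

lemma ofRay_true_strictMono : StrictMono (ofRay true) := fun _ _ h => Sum.Lex.inr_lt_inr_iff.2 h

lemma ofRay_false_strictAnti : StrictAnti (ofRay false) := by
  intro r r' h
  have h' : r' ≠ rayZero := (bot_le.trans_lt h).ne'
  rcases eq_or_ne r rayZero with h0 | h0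
  · rw [h0, rayZero_eq_bot, ofRay_false_zero, ofRay_false_of_ne h']
    exact Sum.Lex.inl_lt_inr _ _
  · rw [ofRay_false_of_ne h0, ofRay_false_of_ne h']
    exact Sum.Lex.inl_lt_inl_iff.2 h

lemma ofRay_false_le_ofRay_true (r r' : LongRay) : ofRay false r ≤ ofRay true r' := by
  rcases eq_or_ne r rayZero with h0 | h0
  · rw [h0, rayZero_eq_bot, ofRay_false_zero]
    exact ofRay_true_strictMono.monotone bot_le
  · rw [ofRay_false_of_ne h0]
    exact (Sum.Lex.inl_lt_inr _ _).le

lemma ofRay_bot (s : Bool) : ofRay s ⊥ = ofRay true ⊥ := by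
  cases s
  · exact ofRay_false_zero
  · rfl

lemma part_true_monotone : Monotone (part true) := fun x y h => by
  obtain ⟨s, hx, hx'⟩ := exists_eq_ofRay x
  obtain ⟨s', hy, hy'⟩ := exists_eq_ofRay y
  cases s
  · exact hx'.trans_le bot_le
  cases s'
  · have := (hx.symm.trans_le h).trans_eq hy
    have h2 : ofRay true (part true x) = ofRay true ⊥ := le_antisymm
      (this.trans (ofRay_false_le_ofRay_true _ _)) (ofRay_true_strictMono.monotone bot_le)
    rw [ofRay_true_strictMono.injective h2]
    exact bot_le
  · rw [hx, hy] at h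
    exact ofRay_true_strictMono.le_iff_le.1 h

lemma part_false_antitone : Antitone (part false) := fun x y h => by
  obtain ⟨s, hx, hx'⟩ := exists_eq_ofRay x
  obtain ⟨s', hy, hy'⟩ := exists_eq_ofRay y
  cases s'
  · cases s
    · rw [hx, hy] at h
      exact ofRay_false_strictAnti.le_iff_ge.1 h
    · have := (hx.symm.trans_le h).trans_eq hy
      have h2 : ofRay false (part false y) = ofRay false ⊥ := le_antisymm
        (ofRay_false_strictAnti.antitone bot_le)
        ((ofRay_bot false).trans_le ((ofRay_true_strictMono.monotone bot_le).trans this))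
      rw [ofRay_false_strictAnti.injective h2]
      exact bot_le
  · exact hy'.trans_le bot_le

@[fun_prop]
lemma continuous_part (s : Bool) : Continuous (part s) := by
  have hsurj : Function.Surjective (part s) := fun r => ⟨_, part_ofRay s r⟩
  cases s
  · exact Monotone.continuous_of_surjective (α := LongLineᵒᵈ)
      (fun x y h => part_false_antitone h) hsurj
  · exact part_true_monotone.continuous_of_surjective hsurj

@[fun_prop]
lemma continuous_ofRay (s : Bool) : Continuous (ofRay s) := by
  cases s
  · have hmono : StrictMono (fun r : LongRayᵒᵈ => ofRay false (OrderDual.ofDual r)) :=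
      fun r r' h => ofRay_false_strictAnti h
    have hoc : (range fun r : LongRayᵒᵈ => ofRay false (OrderDual.ofDual r)).OrdConnected := by
      refine ⟨?_⟩
      rintro _ ⟨r, rfl⟩ _ ⟨r', rfl⟩ z ⟨-, hz⟩
      obtain ⟨s, hzs, hz'⟩ := exists_eq_ofRay z
      cases s
      · exact ⟨_, hzs.symm⟩
      · refine ⟨OrderDual.toDual ⊥, ?_⟩
        dsimp only at hz
        rw [hzs] at hz ⊢
        refine le_antisymm (ofRay_false_le_ofRay_true _ _) (hz.trans ?_)
        exact ofRay_false_strictAnti.antitone bot_le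
    exact (hmono.isEmbedding_of_ordConnected hoc).continuous
  · have hoc : (range (ofRay true)).OrdConnected := by
      refine ⟨?_⟩
      rintro _ ⟨r, rfl⟩ _ ⟨r', rfl⟩ z ⟨hz, -⟩
      obtain ⟨s, hzs, hz'⟩ := exists_eq_ofRay z
      cases s
      · refine ⟨⊥, ?_⟩
        rw [hzs] at hz ⊢
        refine le_antisymm ?_ (ofRay_false_le_ofRay_true _ _)
        exact (ofRay_true_strictMono.monotone bot_le).trans hz
      · exact ⟨_, hzs.symm⟩
    exact (ofRay_true_strictMono.isEmbedding_of_ordConnected hoc).continuous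

instance : PathConnectedSpace LongLine := by
  have h : ∀ x : LongLine, Joined x (ofRay true ⊥) := fun x => by
    obtain ⟨s, hx, -⟩ := exists_eq_ofRay x
    rw [hx, ← ofRay_bot s]
    exact (PathConnectedSpace.joined _ _).map (continuous_ofRay s)
  exact ⟨⟨ofRay true ⊥⟩, fun x y => (h x).trans (h y).symm⟩

lemma setOf_part_le_subset (δ : LongRay) :
    {x : LongLine | ∀ s, part s x ≤ δ} ⊆ ofRay true '' Iic δ ∪ ofRay false '' Iic δ := by
  intro x hx
  obtain ⟨s, hxs, -⟩ := exists_eq_ofRay x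
  cases s
  · exact Or.inr ⟨_, hx _, hxs.symm⟩
  · exact Or.inl ⟨_, hx _, hxs.symm⟩

lemma isSeparable_setOf_part_le (δ : LongRay) :
    TopologicalSpace.IsSeparable {x : LongLine | ∀ s, part s x ≤ δ} :=
  (((LongRay.isSeparable_Iic δ).image (continuous_ofRay true)).union
    ((LongRay.isSeparable_Iic δ).image (continuous_ofRay false))).mono (setOf_part_le_subset δ)

lemma isCompact_setOf_part_le (δ : LongRay) : IsCompact {x : LongLine | ∀ s, part s x ≤ δ} := by
  refine (((LongRay.isCompact_Iic δ).image (continuous_ofRay true)).union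
    ((LongRay.isCompact_Iic δ).image (continuous_ofRay false))).of_isClosed_subset ?_
      (setOf_part_le_subset δ)
  simp only [ofPred_forall]
  exact isClosed_iInter fun s => isClosed_le (continuous_part s) continuous_const

end LongLine

section CofinalityClass

open LongRay

variable {n : ℕ}

lemma Admissible.mono {I J : Finset (Fin n × Bool)} (hJ : Admissible n J) (h : I ⊆ J) :
    Admissible n I := fun i hi => hJ i ⟨h hi.1, h hi.2⟩

lemma Admissible.not_mem_opposite {J : Finset (Fin n × Bool)} (hJ : Admissible n J)
    {p : Fin n × Bool} (hp : p ∈ J) : (p.1, !p.2) ∉ J := fun h => by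
  obtain ⟨i, s⟩ := p
  cases s
  · exact hJ i ⟨h, hp⟩
  · exact hJ i ⟨hp, h⟩

namespace LongLine

/-- The signed coordinate of a point of `𝖫ⁿ`. -/
def coord (x : Fin n → LongLine) (p : Fin n × Bool) : LongRay := part p.2 (x p.1)

@[fun_prop]
lemma continuous_coord (p : Fin n × Bool) : Continuous fun x : Fin n → LongLine => coord x p :=
  (continuous_part p.2).comp (continuous_apply p.1)

/-- The point whose signed coordinates in `J` equal `r`, with the other coordinates those
of `y`. -/
def diag (J : Finset (Fin n × Bool)) (y : Fin n → LongLine) (r : LongRay) : Fin n → LongLine :=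
  fun i => if (i, true) ∈ J then ofRay true r else if (i, false) ∈ J then ofRay false r else y i

lemma continuous_diag (J : Finset (Fin n × Bool)) :
    Continuous fun z : (Fin n → LongLine) × LongRay => diag J z.1 z.2 := by
  refine continuous_pi fun i => ?_
  unfold diag
  split_ifs <;> fun_prop

/-- The origin of `𝖫ⁿ`. -/
def origin : Fin n → LongLine := fun _ => ofRay true ⊥

lemma coord_origin (p : Fin n × Bool) : coord (origin : Fin n → LongLine) p = ⊥ := by
  obtain ⟨i, s⟩ := p
  cases s
  · exact part_ofRay_not true ⊥
  · exact part_ofRay true ⊥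

lemma admissible_filter_le_coord (x : Fin n → LongLine) {a : LongRay} (ha : ⊥ < a) :
    Admissible n {p | a ≤ coord x p} := fun i ⟨h, h'⟩ => by
  have h1 : ⊥ < part true (x i) := ha.trans_le (Finset.mem_filter.1 h).2
  have h2 : ⊥ < part false (x i) := ha.trans_le (Finset.mem_filter.1 h').2
  obtain ⟨s, -, hs⟩ := exists_eq_ofRay (x i)
  cases s
  · exact h1.ne' hs
  · exact h2.ne' hs

variable {J K : Finset (Fin n × Bool)} {y : Fin n → LongLine} {r : LongRay} {p : Fin n × Bool}

lemma coord_diag_of_mem (hJ : Admissible n J) (hp : p ∈ J) : coord (diag J y r) p = r := by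
  have h := hJ.not_mem_opposite hp
  obtain ⟨i, s⟩ := p
  cases s
  · have h' : (i, true) ∉ J := h
    simp only [coord, diag, h', hp, if_true, if_false, part_ofRay]
  · simp only [coord, diag, hp, if_true, part_ofRay]

lemma coord_diag_of_not_mem (hp : p ∉ J) (hp' : (p.1, !p.2) ∉ J) :
    coord (diag J y r) p = coord y p := by
  obtain ⟨i, s⟩ := p
  cases s
  · have h' : (i, true) ∉ J := hp'
    simp only [coord, diag, h', hp, if_false]
  · have h' : (i, false) ∉ J := hp'
    simp only [coord, diag, h', hp, if_false]

lemma coord_diag_le (hp : p ∉ J) : coord (diag J y r) p ≤ coord y p := by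
  by_cases hp' : (p.1, !p.2) ∈ J
  · obtain ⟨i, s⟩ := p
    refine le_of_eq_of_le ?_ bot_le
    cases s
    · have h' : (i, true) ∈ J := hp'
      simp only [coord, diag, h', if_true]
      exact part_ofRay_not true r
    · have h' : (i, false) ∈ J := hp'
      simp only [coord, diag, h', hp, if_true, if_false]
      exact part_ofRay_not false r
  · exact (coord_diag_of_not_mem hp hp').le

lemma diag_diag_eq {a : Fin n → LongLine} (hr : ⊥ < r) (ha : ∀ p ∈ K, coord a p = r)
    (s : LongRay) : diag K (diag K a s) r = a := by
  funext i
  by_cases h : (i, true) ∈ K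
  · have h1 : part true (a i) = r := ha _ h
    simp only [diag, h, if_true]
    rw [← h1]
    exact (eq_ofRay_of_pos (hr.trans_eq h1.symm)).symm
  by_cases h' : (i, false) ∈ K
  · have h1 : part false (a i) = r := ha _ h'
    simp only [diag, h, h', if_true, if_false]
    rw [← h1]
    exact (eq_ofRay_of_pos (hr.trans_eq h1.symm)).symm
  · simp only [diag, h, h', if_false]

/-- The points of `𝖫ⁿ` all of whose signed coordinates are at most `δ`. -/
def box (n : ℕ) (δ : LongRay) : Set (Fin n → LongLine) := {x | ∀ q, coord x q ≤ δ}

lemma box_eq_pi (δ : LongRay) :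
    box n δ = univ.pi fun _ => {x : LongLine | ∀ s, part s x ≤ δ} := by
  ext x
  exact ⟨fun h i _ s => h (i, s), fun h q => h q.1 (mem_univ _) q.2⟩

lemma isCompact_box (δ : LongRay) : IsCompact (box n δ) := by
  rw [box_eq_pi]
  exact isCompact_univ_pi fun _ => isCompact_setOf_part_le δ

lemma isSeparable_box (δ : LongRay) : TopologicalSpace.IsSeparable (box n δ) := by
  rw [box_eq_pi]
  exact TopologicalSpace.IsSeparable.univ_pi fun _ => isSeparable_setOf_part_le δ

/-- A closed set meeting every neighbourhood of infinity in the directions `K` meets the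
diagonals in these directions arbitrarily far out. -/
lemma exists_diag_mem {S : Set (Fin n → LongLine)} (hS : IsClosed S) {δ : LongRay}
    (h : ∀ γ, ∃ x ∈ S, (∀ p ∈ K, γ ≤ coord x p) ∧ ∀ q ∉ K, coord x q ≤ δ)
    (hK : Admissible n K) (γ : LongRay) : ∃ ξ ≥ γ, ∃ y ∈ box n δ, diag K y ξ ∈ S := by
  choose g hgS hgK hgo using h
  obtain ⟨γ₀, hγ₀⟩ := exists_gt γ
  let u : ℕ → LongRay := fun k =>
    Nat.rec γ₀ (fun _ a => a ⊔ Finset.univ.sup fun p => coord (g a) p) k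
  have hsucc : ∀ k, u (k + 1) = u k ⊔ Finset.univ.sup fun p => coord (g (u k)) p := fun _ => rfl
  have hu : Monotone u := monotone_nat_of_le_succ fun k => le_sup_left
  obtain ⟨ξ, hξ, hle⟩ := exists_tendsto_of_monotone hu
  have hup : ∀ k p, coord (g (u k)) p ≤ u (k + 1) := fun k p => by
    rw [hsucc]
    exact (Finset.le_sup (f := fun p => coord (g (u k)) p) (Finset.mem_univ p)).trans le_sup_right
  have hlim : ∀ p ∈ K, Filter.Tendsto (fun k => coord (g (u k)) p) Filter.atTop (nhds ξ) :=
    fun p hp => tendsto_of_tendsto_of_tendsto_of_le_of_le hξ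
      (hξ.comp (Filter.tendsto_add_atTop_nat 1)) (fun k => hgK _ p hp) (fun k => hup k p)
  have hbox : ∀ k, g (u k) ∈ box n ξ := fun k q => (hup k q).trans (hle (k + 1))
  obtain ⟨a, -, ha⟩ := (isCompact_box ξ).ultrafilter_le_nhds'
    ((Filter.hyperfilter ℕ).map fun k => g (u k))
    (Ultrafilter.mem_map.2 (Filter.univ_mem' hbox))
  have ha' : Filter.Tendsto (fun k => g (u k)) (Filter.hyperfilter ℕ) (nhds a) := ha
  have hac : ∀ p, Filter.Tendsto (fun k => coord (g (u k)) p) (Filter.hyperfilter ℕ)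
    (nhds (coord a p)) := fun p => ((continuous_coord p).tendsto a).comp ha'
  have haK : ∀ p ∈ K, coord a p = ξ := fun p hp =>
    tendsto_nhds_unique (hac p) ((hlim p hp).mono_left Nat.hyperfilter_le_atTop)
  have hξ₀ : γ < ξ := hγ₀.trans_le (hle 0)
  refine ⟨ξ, hξ₀.le, diag K a ⊥, fun q => ?_, ?_⟩
  · by_cases hq : q ∈ K
    · rw [coord_diag_of_mem hK hq]
      exact bot_le
    · exact (coord_diag_le hq).trans (le_of_tendsto' (hac q) fun k => hgo _ q hq)
  · rw [diag_diag_eq (bot_le.trans_lt hξ₀) haK]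
    exact hS.mem_of_tendsto ha' (Filter.Eventually.of_forall fun k => hgS _)

/-- The admissible sets of directions along whose diagonal `f` is unbounded. -/
def cof (f : C(Fin n → LongLine, LongRay)) : Set (Finset (Fin n × Bool)) :=
  {J | Admissible n J ∧ ¬ BddAbove (range fun r => f (diag J origin r))}

lemma cof_eq_of_homotopic {f g : C(Fin n → LongLine, LongRay)} (h : f.Homotopic g) :
    cof f = cof g := by
  obtain ⟨H⟩ := h
  ext J
  have hF : Continuous fun z : unitInterval × LongRay => H (z.1, diag J origin z.2) :=
    H.continuous.comp (continuous_fst.prodMk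
      ((continuous_diag J).comp (continuous_const.prodMk continuous_snd)))
  have := bddAbove_iff_of_preconnected hF 0 1
  simp only [H.apply_zero, H.apply_one] at this
  simp only [cof, mem_ofPred_eq, this]

variable {f g : C(Fin n → LongLine, LongRay)}

lemma bddAbove_diag_iff (f : C(Fin n → LongLine, LongRay)) (J : Finset (Fin n × Bool))
    (y y' : Fin n → LongLine) :
    BddAbove (range fun r => f (diag J y r)) ↔ BddAbove (range fun r => f (diag J y' r)) := by
  let γ := PathConnectedSpace.somePath y y'
  have hF : Continuous fun z : unitInterval × LongRay => f (diag J (γ z.1) z.2) :=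
    f.continuous.comp ((continuous_diag J).comp
      ((γ.continuous.comp continuous_fst).prodMk continuous_snd))
  simpa using bddAbove_iff_of_preconnected hF 0 1

lemma exists_diag_bound (hJ : Admissible n J) (h : J ∉ cof f) (δ : LongRay) :
    ∃ γ, ∀ y ∈ box n δ, ∀ r, f (diag J y r) ≤ γ := by
  obtain ⟨c, hc, hδ⟩ := isSeparable_box (n := n) δ
  have hb : BddAbove (range fun r => f (diag J origin r)) := not_not.1 fun hb => h ⟨hJ, hb⟩
  obtain ⟨γ, hγ⟩ := exists_uniform_bound (f.continuous.comp (continuous_diag J)) hc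
    fun y _ => (bddAbove_diag_iff f J origin y).1 hb
  exact ⟨γ, fun y hy => hγ y (hδ hy)⟩

lemma exists_diag_lower_bound (h : J ∈ cof f) (δ β : LongRay) :
    ∃ γ, ∀ y ∈ box n δ, ∀ r, γ ≤ r → β ≤ f (diag J y r) := by
  obtain ⟨c, hc, hδ⟩ := isSeparable_box (n := n) δ
  obtain ⟨γ, hγ⟩ := exists_uniform_lower_bound (f.continuous.comp (continuous_diag J)) hc
    (fun y _ hb => h.2 ((bddAbove_diag_iff f J origin y).2 hb)) β
  exact ⟨γ, fun y hy => hγ y (hδ hy)⟩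

lemma mem_cof_of_subset (hJ : J ∈ cof f) (hK : Admissible n K) (hJK : J ⊆ K) : K ∈ cof f := by
  by_contra hKf
  obtain ⟨B, hB⟩ := exists_diag_bound hK hKf ⊥
  obtain ⟨β, hβ⟩ := exists_gt B
  obtain ⟨ξ, -, y, hy, hS⟩ := exists_diag_mem (S := {x | β ≤ f x}) (δ := ⊥)
    (isClosed_le continuous_const f.continuous) (K := K) (fun γ => by
      have hbox : diag K origin γ ∈ box n γ := fun q => by
        by_cases hq : q ∈ K
        · exact (coord_diag_of_mem hK hq).le
        · exact (coord_diag_le hq).trans ((coord_origin q).trans_le bot_le)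
      obtain ⟨γ', hγ'⟩ := exists_diag_lower_bound hJ γ β
      refine ⟨diag J (diag K origin γ) (γ' ⊔ γ), hγ' _ hbox _ le_sup_left, fun p hp => ?_,
        fun q hq => ?_⟩
      · by_cases hpJ : p ∈ J
        · rw [coord_diag_of_mem hJ.1 hpJ]
          exact le_sup_right
        · rw [coord_diag_of_not_mem hpJ fun h => hK.not_mem_opposite hp (hJK h),
            coord_diag_of_mem hK hp]
      · exact (coord_diag_le fun h => hq (hJK h)).trans
          ((coord_diag_le hq).trans (coord_origin q).le)) hK ⊥
  exact absurd (hβ.trans_le hS) (not_lt.2 (hB y hy ξ))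

/-- Off the cofinality class, `f` is bounded on the whole region spanned by the directions. -/
lemma exists_bound (hJ : Admissible n J) (h : J ∉ cof f) (δ : LongRay) :
    ∃ γ, ∀ x, (∀ q ∉ J, coord x q ≤ δ) → f x ≤ γ := by
  induction J using Finset.strongInduction generalizing δ with
  | _ J ih =>
  obtain ⟨B, hB⟩ := exists_diag_bound hJ h δ
  obtain ⟨β, hβ⟩ := exists_gt B
  by_contra! hcon
  obtain ⟨ξ, -, y, hy, hS⟩ := exists_diag_mem (S := {x | β ≤ f x}) (δ := δ)
    (isClosed_le continuous_const f.continuous) (K := J) (fun γ => by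
      have hM : ∀ p, ∃ M, p ∈ J → ∀ x, (∀ q ∉ J.erase p, coord x q ≤ δ ⊔ γ) → f x ≤ M :=
        fun p => by
          by_cases hp : p ∈ J
          · obtain ⟨M, hM⟩ := ih _ (Finset.erase_ssubset hp) (hJ.mono (Finset.erase_subset _ _))
              (fun hc => h (mem_cof_of_subset hc hJ (Finset.erase_subset _ _))) (δ ⊔ γ)
            exact ⟨M, fun _ => hM⟩
          · exact ⟨⊥, fun h => absurd h hp⟩
      choose M hM using hM
      obtain ⟨x, hx, hlt⟩ := hcon (β ⊔ Finset.univ.sup M)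
      refine ⟨x, le_sup_left.trans hlt.le, fun p hp => ?_, hx⟩
      by_contra! hpγ
      refine absurd hlt (not_lt.2 ((hM p hp x fun q hq => ?_).trans
        ((Finset.le_sup (Finset.mem_univ p)).trans le_sup_right)))
      by_cases hqp : q = p
      · rw [hqp]
        exact hpγ.le.trans le_sup_right
      · exact (hx q fun hqJ => hq (Finset.mem_erase.2 ⟨hqp, hqJ⟩)).trans le_sup_left) hJ ⊥
  exact absurd (hβ.trans_le hS) (not_lt.2 (hB y hy ξ))

/-- On the cofinality class, `f` is large wherever all the directions are. -/
lemma exists_lower_bound (h : J ∈ cof f) (δ β : LongRay) :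
    ∃ γ, ∀ x, (∀ p ∈ J, γ ≤ coord x p) → (∀ q ∉ J, coord x q ≤ δ) → β ≤ f x := by
  obtain ⟨β', hβ⟩ := exists_gt β
  obtain ⟨γ, hγ⟩ := exists_diag_lower_bound h δ β'
  by_contra! hcon
  obtain ⟨ξ, hξ, y, hy, hS⟩ := exists_diag_mem (S := {x | f x ≤ β}) (δ := δ)
    (isClosed_le f.continuous continuous_const) (K := J) (fun γ => by
      obtain ⟨x, hx, hx', hlt⟩ := hcon γ
      exact ⟨x, hlt.le, hx, hx'⟩) h.1 γ
  exact absurd (hβ.trans_le (hγ y hy ξ hξ)) (not_lt.2 hS)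

/-- `γ` witnesses the bounds on `f` at height `δ` for all sets of directions at once. -/
structure IsGauge (f : C(Fin n → LongLine, LongRay)) (δ γ : CtblOrd) : Prop where
  le : ∀ J, Admissible n J → J ∉ cof f → ∀ x, (∀ q ∉ J, coord x q ≤ ofOrd δ) → f x ≤ ofOrd γ
  ge : ∀ J ∈ cof f, ∀ x, (∀ p ∈ J, ofOrd γ ≤ coord x p) → (∀ q ∉ J, coord x q ≤ ofOrd δ) →
    ofOrd δ ≤ f x

lemma IsGauge.mono {δ δ' γ γ' : CtblOrd} (h : IsGauge f δ γ) (hδ : δ' ≤ δ) (hγ : γ ≤ γ') :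
    IsGauge f δ' γ' where
  le J hJ hJf x hx := (h.le J hJ hJf x fun q hq =>
    (hx q hq).trans (ofOrd_strictMono.monotone hδ)).trans (ofOrd_strictMono.monotone hγ)
  ge J hJ x hx hx' := (ofOrd_strictMono.monotone hδ).trans (h.ge J hJ x
    (fun p hp => (ofOrd_strictMono.monotone hγ).trans (hx p hp))
    (fun q hq => (hx' q hq).trans (ofOrd_strictMono.monotone hδ)))

lemma exists_isGauge (f : C(Fin n → LongLine, LongRay)) (δ : CtblOrd) : ∃ γ, IsGauge f δ γ := by
  have h1 : ∀ J, ∃ γ, Admissible n J → J ∉ cof f →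
      ∀ x, (∀ q ∉ J, coord x q ≤ ofOrd δ) → f x ≤ γ := fun J => by
    by_cases h : Admissible n J ∧ J ∉ cof f
    · obtain ⟨γ, hγ⟩ := exists_bound h.1 h.2 (ofOrd δ)
      exact ⟨γ, fun _ _ => hγ⟩
    · exact ⟨⊥, fun hJ hJf => absurd ⟨hJ, hJf⟩ h⟩
  have h2 : ∀ J, ∃ γ, J ∈ cof f → ∀ x, (∀ p ∈ J, γ ≤ coord x p) →
      (∀ q ∉ J, coord x q ≤ ofOrd δ) → ofOrd δ ≤ f x := fun J => by
    by_cases h : J ∈ cof f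
    · obtain ⟨γ, hγ⟩ := exists_lower_bound h (ofOrd δ) (ofOrd δ)
      exact ⟨γ, fun _ => hγ⟩
    · exact ⟨⊥, fun hJ => absurd hJ h⟩
  choose u hu using h1
  choose v hv using h2
  obtain ⟨b, -, hb⟩ := exists_lt_ofOrd (Finset.univ.sup u ⊔ Finset.univ.sup v)
  exact ⟨b, fun J hJ hJf x hx => (hu J hJ hJf x hx).trans
      ((Finset.le_sup (Finset.mem_univ J)).trans (le_sup_left.trans hb.le)),
    fun J hJ x hx => hv J hJ x fun p hp =>
      ((Finset.le_sup (Finset.mem_univ J)).trans (le_sup_right.trans hb.le)).trans (hx p hp)⟩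

lemma le_iff_mem_cof {α : CtblOrd} (hα : ∀ δ < α, ∃ γ < α, δ < γ ∧ IsGauge f δ γ) (hpos : ⊥ < α)
    (x : Fin n → LongLine) :
    ofOrd α ≤ f x ↔ ({p | ofOrd α ≤ coord x p} : Finset (Fin n × Bool)) ∈ cof f := by
  set J : Finset (Fin n × Bool) := {p | ofOrd α ≤ coord x p} with hJdef
  have hposα : (⊥ : LongRay) < ofOrd α := ofOrd_bot ▸ ofOrd_strictMono hpos
  have hJ : Admissible n J := admissible_filter_le_coord x hposα
  have hmem : ∀ p, p ∈ J ↔ ofOrd α ≤ coord x p := by simp [hJdef]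
  let δ : CtblOrd := Jᶜ.sup fun q => (coord x q).fst
  have hδ : δ < α := (Finset.sup_lt_iff hpos).2 fun q hq =>
    lt_ofOrd_iff.1 (not_le.1 fun h => Finset.mem_compl.1 hq ((hmem q).2 h))
  have hoff : ∀ γ, δ < γ → ∀ q ∉ J, coord x q ≤ ofOrd γ := fun γ hγ q hq =>
    (lt_ofOrd_iff.2 ((Finset.le_sup (f := fun q => (coord x q).fst)
      (Finset.mem_compl.2 hq)).trans_lt hγ)).le
  constructor
  · intro h
    by_contra hJf
    obtain ⟨γ, hγα, hδγ, -⟩ := hα δ hδ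
    obtain ⟨γ', hγ'α, -, hg⟩ := hα γ hγα
    exact absurd (h.trans (hg.le J hJ hJf x (hoff γ hδγ))) (not_le.2 (ofOrd_strictMono hγ'α))
  · intro hJf
    by_contra! h
    obtain ⟨γ, hγα, hδγ, -⟩ := hα (δ ⊔ (f x).fst) (max_lt hδ (lt_ofOrd_iff.1 h))
    obtain ⟨γ', hγ'α, -, hg⟩ := hα γ hγα
    have := hg.ge J hJf x
      (fun p hp => (ofOrd_strictMono.monotone hγ'α.le).trans ((hmem p).1 hp))
      (hoff γ (le_sup_left.trans_lt hδγ))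
    exact absurd (lt_ofOrd_iff.2 (le_sup_right.trans_lt hδγ)) (not_lt.2 this)

end LongLine

/-- The closure points of a relation cofinal in its second argument are closed unbounded. -/
lemma isClosedUnbounded_setOf {P : CtblOrd → CtblOrd → Prop} (hP : ∀ δ, ∃ γ, δ < γ ∧ P δ γ)
    (hanti : ∀ δ' δ γ, δ' ≤ δ → P δ γ → P δ' γ) :
    IsClosedUnbounded {α | ∀ δ < α, ∃ γ < α, δ < γ ∧ P δ γ} where
  bot_mem δ hδ := absurd hδ not_lt_bot
  isLUB_mem S hS _ a ha δ hδ := by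
    obtain ⟨s, hs, hδs⟩ := (lt_isLUB_iff ha).1 hδ
    obtain ⟨γ, hγ, h⟩ := hS hs δ hδs
    exact ⟨γ, hγ.trans_le (ha.1 hs), h⟩
  exists_gt a := by
    choose G hG hGP using hP
    let u : ℕ → CtblOrd := fun k => G^[k] a
    have hsucc : ∀ k, u (k + 1) = G (u k) := fun k => Function.iterate_succ_apply' G k a
    have hlt : ∀ k, u k < u (k + 1) := fun k => (hG (u k)).trans_eq (hsucc k).symm
    obtain ⟨b, hb⟩ := CtblOrd.exists_forall_le u
    obtain ⟨c, hc⟩ := CtblOrd.exists_isLUB (S := range u) ⟨b, forall_mem_range.2 hb⟩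
    have hle : ∀ k, u k ≤ c := fun k => hc.1 (mem_range_self k)
    refine ⟨c, fun δ hδ => ?_, (hlt 0).trans_le (hle 1)⟩
    obtain ⟨_, ⟨k, rfl⟩, hk⟩ := (lt_isLUB_iff hc).1 hδ
    exact ⟨u (k + 1), (hlt (k + 1)).trans_le (hle _), hk.trans (hlt k),
      hanti _ _ _ hk.le (hsucc k ▸ hGP (u k))⟩

namespace LongLine

variable {f g : C(Fin n → LongLine, LongRay)} {J : Finset (Fin n × Bool)}

theorem homotopic_of_cof_eq (h : cof f = cof g) : f.Homotopic g := by
  have hC := isClosedUnbounded_setOf (P := fun δ γ => IsGauge f δ γ ∧ IsGauge g δ γ)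
    (fun δ => by
      obtain ⟨γ, hγ⟩ := exists_isGauge f δ
      obtain ⟨γ', hγ'⟩ := exists_isGauge g δ
      obtain ⟨b, hb⟩ := exists_gt (δ ⊔ γ ⊔ γ')
      exact ⟨b, (le_sup_left.trans le_sup_left).trans_lt hb,
        hγ.mono le_rfl ((le_sup_right.trans le_sup_left).trans hb.le),
        hγ'.mono le_rfl (le_sup_right.trans hb.le)⟩)
    (fun _ _ _ hle hg => ⟨hg.1.mono hle le_rfl, hg.2.mono hle le_rfl⟩)
  refine hC.homotopic fun α hα x => ?_
  rcases eq_bot_or_bot_lt α with rfl | hpos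
  · simp only [ofOrd_bot, bot_le]
  · rw [le_iff_mem_cof (fun δ hδ => ?_) hpos, le_iff_mem_cof (fun δ hδ => ?_) hpos, h]
    · obtain ⟨γ, hγ, hlt, -, hg⟩ := hα δ hδ
      exact ⟨γ, hγ, hlt, hg⟩
    · obtain ⟨γ, hγ, hlt, hg, -⟩ := hα δ hδ
      exact ⟨γ, hγ, hlt, hg⟩

/-- The map `x ↦ max_{I ∈ A} min_{p ∈ I} |x|_p`. -/
def canonicalMap (A : Set (Finset (Fin n × Bool))) : C(Fin n → LongLine, LongRay) where
  toFun x := A.toFinite.toFinset.sup fun I =>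
    if h : I.Nonempty then I.inf' h fun p => coord x p else ⊥
  continuous_toFun := by
    refine Continuous.finset_sup_apply fun I _ => ?_
    split_ifs with h
    · exact Continuous.finset_inf'_apply h fun p _ => continuous_coord p
    · exact continuous_const

lemma le_canonicalMap_iff {A : Set (Finset (Fin n × Bool))} (hA : ∀ I ∈ A, I.Nonempty)
    {a : LongRay} (ha : ⊥ < a) (x : Fin n → LongLine) :
    a ≤ canonicalMap A x ↔ ∃ I ∈ A, ∀ p ∈ I, a ≤ coord x p := by
  refine (Finset.le_sup_iff ha).trans ⟨?_, ?_⟩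
  · rintro ⟨I, hI, h⟩
    rw [Set.Finite.mem_toFinset] at hI
    rw [dif_pos (hA I hI), Finset.le_inf'_iff] at h
    exact ⟨I, hI, h⟩
  · rintro ⟨I, hI, h⟩
    refine ⟨I, (Set.Finite.mem_toFinset _).2 hI, ?_⟩
    rwa [dif_pos (hA I hI), Finset.le_inf'_iff]

lemma mem_cof_canonicalMap {A : Set (Finset (Fin n × Bool))} (hA : ∀ I ∈ A, I.Nonempty) :
    J ∈ cof (canonicalMap A) ↔ Admissible n J ∧ ∃ I ∈ A, I ⊆ J := by
  refine and_congr_right fun hJ => ⟨fun h => ?_, ?_⟩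
  · have : ∃ r, ⊥ < canonicalMap A (diag J origin r) := by
      by_contra! hle
      exact h ⟨⊥, forall_mem_range.2 hle⟩
    obtain ⟨r, hr⟩ := this
    obtain ⟨I, hI, hle⟩ := (le_canonicalMap_iff hA hr _).1 le_rfl
    refine ⟨I, hI, fun p hp => ?_⟩
    by_contra hpJ
    exact absurd ((hr.trans_le (hle p hp)).trans_le (coord_diag_le hpJ))
      (not_lt.2 (coord_origin p).le)
  · rintro ⟨I, hI, hIJ⟩
    refine not_bddAbove_of_forall_ge fun β => ?_
    obtain ⟨β', hβ⟩ := exists_gt β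
    refine ⟨β', hβ.le.trans ((le_canonicalMap_iff hA (bot_le.trans_lt hβ) _).2
      ⟨I, hI, fun p hp => ?_⟩)⟩
    exact (coord_diag_of_mem hJ (hIJ hp)).ge

/-- The minimal elements of the cofinality class. -/
def minCof (f : C(Fin n → LongLine, LongRay)) : Set (Finset (Fin n × Bool)) :=
  {J | Minimal (· ∈ cof f) J}

lemma isAntichain_minCof (f : C(Fin n → LongLine, LongRay)) :
    IsAntichain (· ⊆ ·) (minCof f) := setOfPred_minimal_antichain (· ∈ cof f)

lemma nonempty_of_mem_cof (h : J ∈ cof f) : J.Nonempty := by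
  rw [Finset.nonempty_iff_ne_empty]
  rintro rfl
  refine h.2 ⟨f origin, forall_mem_range.2 fun r => le_of_eq ?_⟩
  congr 1

lemma cof_canonicalMap_minCof (f : C(Fin n → LongLine, LongRay)) :
    cof (canonicalMap (minCof f)) = cof f := by
  ext J
  rw [mem_cof_canonicalMap fun I hI => nonempty_of_mem_cof hI.prop]
  constructor
  · rintro ⟨hJ, I, hI, hIJ⟩
    exact mem_cof_of_subset hI.prop hJ hIJ
  · intro hJ
    obtain ⟨I, hIJ, hI⟩ := (cof f).toFinite.exists_le_minimal hJ
    exact ⟨hJ.1, I, hI, hIJ⟩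

lemma minCof_canonicalMap {A : Set (Finset (Fin n × Bool))}
    (hA : ∀ I ∈ A, Admissible n I ∧ I.Nonempty) (hanti : IsAntichain (· ⊆ ·) A) :
    minCof (canonicalMap A) = A := by
  have hmem := fun J => mem_cof_canonicalMap (J := J) fun I hI => (hA I hI).2
  have hsub : ∀ I ∈ A, I ∈ cof (canonicalMap A) := fun I hI =>
    (hmem I).2 ⟨(hA I hI).1, I, hI, subset_rfl⟩
  ext J
  constructor
  · intro hJ
    obtain ⟨-, I, hI, hIJ⟩ := (hmem J).1 hJ.prop
    exact hJ.eq_of_le (hsub I hI) hIJ ▸ hI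
  · refine fun hJ => ⟨hsub J hJ, fun K hK hKJ => ?_⟩
    obtain ⟨-, I, hI, hIK⟩ := (hmem K).1 hK
    have := hanti.eq hI hJ (hIK.trans hKJ)
    exact this ▸ hIK

end LongLine

end CofinalityClass

/-- `[𝖫ⁿ, 𝖱]` is in bijection with the antichains of the set of
nonempty admissible subsets of `N^± = {+1,…,+n,−1,…,−n}`, ordered by inclusion. -/
theorem homotopy_classes_longline_to_ray (n : ℕ) :
    Nonempty (Quot (fun f g : C(Fin n → LongLine, LongRay) => f.Homotopic g) ≃
      {A : Set (Finset (Fin n × Bool)) //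
        (∀ I ∈ A, Admissible n I ∧ I.Nonempty) ∧ IsAntichain (· ⊆ ·) A}) := by
  refine ⟨Quot.lift (fun f => ⟨LongLine.minCof f,
      fun I hI => ⟨hI.prop.1, LongLine.nonempty_of_mem_cof hI.prop⟩,
      LongLine.isAntichain_minCof f⟩) fun f g h => Subtype.ext ?_,
    fun A => Quot.mk _ (LongLine.canonicalMap A), ?_, fun A => Subtype.ext ?_⟩
  · simp only [LongLine.minCof, LongLine.cof_eq_of_homotopic h]
  · rintro ⟨f⟩
    exact Quot.sound (LongLine.homotopic_of_cof_eq (LongLine.cof_canonicalMap_minCof f))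
  · exact LongLine.minCof_canonicalMap A.2.1 A.2.2
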